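/- Let X be a random vector in ℝ^d whose law is absolutely continuous with respect to Lebesgue measure, and let (D, B) and (D', B') be random elements of ℝ^d × ℝ such that the pair ((D, B), (D', B')) is independent of X. Then P( (D, B) ≠ (D', B') and ⟨D, X⟩ + B = ⟨D', X⟩ + B' ) = 0. -/

import Mathlib

open MeasureTheory ProbabilityTheory Matrix

/-!
Two distinct affine functions agree at most on a hyperplane, which the law of `X` does not charge.
By independence the joint law of the parameters and `X` is a product measure, so by Fubini one may
freeze the parameters and only average this null probability over them.
-/

section Independence

variable {Ω α β γ : Type*} [MeasurableSpace Ω] [MeasurableSpace α] [MeasurableSpace β]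
  [MeasurableSpace γ] {μ : Measure Ω} [IsFiniteMeasure μ] {X : Ω → β}

lemma measure_setOf_prodMk_mem_eq_zero_iff_of_indepFun {P : Ω → α} (hP : AEMeasurable P μ)
    (hX : AEMeasurable X μ) (hPX : IndepFun P X μ) {s : Set (α × β)} (hs : MeasurableSet s) :
    μ {ω | (P ω, X ω) ∈ s} = 0 ↔ ∀ᵐ p ∂μ.map P, μ.map X {x | (p, x) ∈ s} = 0 :=
  calc μ {ω | (P ω, X ω) ∈ s} = 0
      ↔ μ.map (fun ω => (P ω, X ω)) s = 0 := by
        rw [Measure.map_apply_of_aemeasurable (hP.prodMk hX) hs]; rfl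
    _ ↔ (μ.map P).prod (μ.map X) s = 0 := by rw [hPX.map_prod_eq_prod_map_map hP hX]
    _ ↔ ∀ᵐ p ∂μ.map P, μ.map X {x | (p, x) ∈ s} = 0 := Measure.measure_prod_null hs

lemma measure_ne_and_apply_eq_apply_eq_zero_of_indepFun [MeasurableEq α] [MeasurableEq γ]
    {f : α → β → γ} (hf : Measurable f.uncurry) {P Q : Ω → α} (hP : AEMeasurable P μ)
    (hQ : AEMeasurable Q μ) (hX : AEMeasurable X μ)
    (hindep : IndepFun (fun ω => (P ω, Q ω)) X μ)
    (hnull : Pairwise fun p q => μ.map X {x | f p x = f q x} = 0) :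
    μ {ω | P ω ≠ Q ω ∧ f (P ω) (X ω) = f (Q ω) (X ω)} = 0 := by
  let s : Set ((α × α) × β) := {z | z.1.1 ≠ z.1.2 ∧ f z.1.1 z.2 = f z.1.2 z.2}
  have hf_fst : Measurable fun z : (α × α) × β => f z.1.1 z.2 := by fun_prop
  have hf_snd : Measurable fun z : (α × α) × β => f z.1.2 z.2 := by fun_prop
  have hs : MeasurableSet s :=
    (measurableSet_eq_fun (by fun_prop) (by fun_prop)).compl.inter
      (measurableSet_eq_fun hf_fst hf_snd)
  refine (measure_setOf_prodMk_mem_eq_zero_iff_of_indepFun (hP.prodMk hQ) hX hindep hs).mpr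
    (ae_of_all _ fun ⟨p, q⟩ => ?_)
  by_cases hpq : p = q
  · simp [s, hpq]
  · exact measure_mono_null (fun _ hx => hx.2) (hnull hpq)

end Independence

section Hyperplane

variable {ι 𝕜 : Type*} [Fintype ι]

/-- A measure charges no hyperplane if it vanishes on every affine hyperplane, encoded by a nonzero
normal vector `v` and a level `c`. For such a measure two distinct affine functions disagree almost
everywhere; it may still be singular, e.g. the surface measure of a sphere in dimension at least
two. -/
def ChargesNoHyperplane [Field 𝕜] [MeasurableSpace 𝕜] (ν : Measure (ι → 𝕜)) : Prop :=
  ∀ v : ι → 𝕜, v ≠ 0 → ∀ c : 𝕜, ν {x | v ⬝ᵥ x = c} = 0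

namespace ChargesNoHyperplane

lemma mono_ac [Field 𝕜] [MeasurableSpace 𝕜] {ν ρ : Measure (ι → 𝕜)}
    (hρ : ChargesNoHyperplane ρ) (hνρ : ν ≪ ρ) : ChargesNoHyperplane ν :=
  fun v hv c => hνρ (hρ v hv c)

lemma measure_dotProduct_add_eq_dotProduct_add [Field 𝕜] [MeasurableSpace 𝕜]
    {ν : Measure (ι → 𝕜)} (hν : ChargesNoHyperplane ν) {p q : (ι → 𝕜) × 𝕜} (hpq : p ≠ q) :
    ν {x | p.1 ⬝ᵥ x + p.2 = q.1 ⬝ᵥ x + q.2} = 0 := by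
  by_cases hslope : p.1 = q.1
  · have hintercept : p.2 ≠ q.2 := fun h => hpq (Prod.ext hslope h)
    simp [hslope, hintercept]
  · have agree_eq_hyperplane : {x | p.1 ⬝ᵥ x + p.2 = q.1 ⬝ᵥ x + q.2} =
        {x | (p.1 - q.1) ⬝ᵥ x = q.2 - p.2} := by
      ext x
      simp only [Set.mem_ofPred_eq, sub_dotProduct, sub_eq_sub_iff_add_eq_add, add_comm q.2]
    rw [agree_eq_hyperplane]
    exact hν _ (sub_ne_zero.mpr hslope) _

end ChargesNoHyperplane

lemma addHaar_setOf_linearMap_eq {E F : Type*} [NormedAddCommGroup E] [NormedSpace ℝ E]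
    [FiniteDimensional ℝ E] [MeasurableSpace E] [BorelSpace E] [AddCommGroup F] [Module ℝ F]
    (ν : Measure E) [ν.IsAddHaarMeasure] {L : E →ₗ[ℝ] F} (hL : L ≠ 0) (c : F) :
    ν {x | L x = c} = 0 := by
  let A : AffineSubspace ℝ E := (AffineSubspace.mk' c ⊥).comap L.toAffineMap
  have mem_A (x : E) : x ∈ A ↔ L x = c := by simp [A, sub_eq_zero]
  have hA : A ≠ ⊤ := fun htop => hL <| LinearMap.ext fun x => by
    have hconst (y : E) : L y = c := (mem_A y).mp (htop ▸ AffineSubspace.mem_top ℝ E y)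
    calc L x = L 0 := (hconst x).trans (hconst 0).symm
      _ = 0 := map_zero L
  exact (congrArg ν (Set.ext mem_A)).symm.trans (Measure.addHaar_affineSubspace ν A hA)

lemma chargesNoHyperplane_addHaar (ν : Measure (ι → ℝ)) [ν.IsAddHaarMeasure] :
    ChargesNoHyperplane ν := fun v hv c =>
  addHaar_setOf_linearMap_eq ν (L := dotProductBilin ℝ ℝ v)
    (fun h => hv <| dotProduct_eq_zero v <| LinearMap.congr_fun h) c

theorem stmt8_general [NormedField 𝕜] [SecondCountableTopology 𝕜] [MeasurableSpace 𝕜]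
    [BorelSpace 𝕜] {Ω : Type*} [MeasurableSpace Ω] {μ : Measure Ω} [IsFiniteMeasure μ]
    {X : Ω → ι → 𝕜} (hX : AEMeasurable X μ) (hlaw : ChargesNoHyperplane (μ.map X))
    {P Q : Ω → (ι → 𝕜) × 𝕜} (hP : AEMeasurable P μ) (hQ : AEMeasurable Q μ)
    (hindep : IndepFun (fun ω => (P ω, Q ω)) X μ) :
    μ {ω | P ω ≠ Q ω ∧
      (P ω).1 ⬝ᵥ X ω + (P ω).2 = (Q ω).1 ⬝ᵥ X ω + (Q ω).2} = 0 := by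
  have heval : Measurable (fun (p : (ι → 𝕜) × 𝕜) (x : ι → 𝕜) => p.1 ⬝ᵥ x + p.2).uncurry := by
    simp only [Function.uncurry_def, dotProduct]
    fun_prop
  exact measure_ne_and_apply_eq_apply_eq_zero_of_indepFun heval hP hQ hX hindep
    fun _ _ hpq => hlaw.measure_dotProduct_add_eq_dotProduct_add hpq

end Hyperplane

/-- Independence (Fubini) lemma from the proof of Theorem 2 of the paper: if `X` is a random
vector in `ℝ^d` with law absolutely continuous with respect to Lebesgue measure, and the pair
of random affine parameters `((D, B), (D', B'))` is independent of `X`, then with probability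
`0` the two parameters differ yet the corresponding affine functions agree at `X`. -/
theorem stmt8 (d : ℕ) {Ω : Type*} [MeasurableSpace Ω]
    (μ : Measure Ω) [IsProbabilityMeasure μ]
    (X : Ω → (Fin d → ℝ)) (hX : Measurable X)
    (hac : Measure.map X μ ≪ volume)
    (D D' : Ω → (Fin d → ℝ)) (B B' : Ω → ℝ)
    (hD : Measurable D) (hD' : Measurable D')
    (hB : Measurable B) (hB' : Measurable B')
    (hindep : IndepFun (fun ω => ((D ω, B ω), (D' ω, B' ω))) X μ) :
    μ {ω | (D ω, B ω) ≠ (D' ω, B' ω) ∧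
        D ω ⬝ᵥ X ω + B ω = D' ω ⬝ᵥ X ω + B' ω} = 0 :=
  stmt8_general hX.aemeasurable ((chargesNoHyperplane_addHaar volume).mono_ac hac)
    (hD.prodMk hB).aemeasurable (hD'.prodMk hB').aemeasurable hindep
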